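/- Fix an integer r ≥ 2, real a ≥ 1 and λ > 0, and define the polynomial Q(x) = (1+λ+a^r+λx^r)·((1+λ)ax + λa + x)^r − ((1+λ)a^r x^r + λ a^r + x^r)·(1+λ+a+λx)^r. Then Q(a) = 0 and Q'(a) = 0, i.e., x = a is a (at least) double root of Q. -/

import Mathlib

/-!
If a coin comes up heads with odds `y`, and another with odds `x`, then choosing between them with
probabilities `L / (1 + L)` and `1 / (1 + L)` gives odds `N y x / D y x`, where `N` and `D` are
`mixedOddsNum L` and `mixedOddsDenom L`. With this notation
`Q x = D (a ^ r) (x ^ r) * N a x ^ r - N (a ^ r) (x ^ r) * D a x ^ r`,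
so a double root at `a` means that mixing commutes with `r`-th powers of the odds to first order
along the diagonal. This holds because near `x = y` the mixed odds are `y + (x - y) / (1 + L)` to
first order, with a slope that does not depend on `y`. Clearing denominators, the computation modulo
`(x - a) ^ 2` is valid in any commutative ring.
-/

open Polynomial

section CommRing

variable {R : Type*} [CommRing R]

/-- Numerator of the odds of heads when a coin with odds `y` is used with probability `L / (1 + L)`
and a coin with odds `x` otherwise. Numerator and denominator are kept apart so that no division is
needed. -/
def mixedOddsNum (L y x : R) : R :=
  (1 + L) * y * x + L * y + x

/-- Denominator of the mixed odds whose numerator is `mixedOddsNum`, with the common factor chosen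
so that the two add up to `(1 + L) * (1 + y) * (1 + x)`. -/
def mixedOddsDenom (L y x : R) : R :=
  1 + L + y + L * x

theorem mixedOddsNum_eq_mul_mixedOddsDenom_add (L y x : R) :
    mixedOddsNum L y x = y * mixedOddsDenom L y x + (1 + y) * (x - y) := by
  unfold mixedOddsNum mixedOddsDenom
  ring

theorem mixedOddsDenom_eq_mul_add (L y x : R) :
    mixedOddsDenom L y x = (1 + L) * (1 + y) + L * (x - y) := by
  unfold mixedOddsDenom
  ring

theorem dvd_mul_mixedOddsDenom_sub_mul_mixedOddsDenom (L : R) {x y z w : R}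
    (h : x - y ∣ z - w) :
    x - y ∣ (1 + y) * mixedOddsDenom L w z - (1 + w) * mixedOddsDenom L y x := by
  obtain ⟨q, hq⟩ := h
  refine ⟨L * ((1 + y) * q - (1 + w)), ?_⟩
  rw [mixedOddsDenom_eq_mul_add, mixedOddsDenom_eq_mul_add L y x]
  linear_combination L * (1 + y) * hq

theorem sq_sub_dvd_pow_sub_pow_sub (r : ℕ) (y x : R) :
    (x - y) ^ 2 ∣ x ^ r - y ^ r - r * y ^ (r - 1) * (x - y) := by
  convert sq_dvd_add_pow_sub_sub (x - y) y r using 1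
  rw [add_sub_cancel]
  ring

theorem sq_sub_dvd_mixedOddsNum_pow_sub (r : ℕ) (L y x : R) :
    (x - y) ^ 2 ∣ mixedOddsNum L y x ^ r - (y * mixedOddsDenom L y x) ^ r -
      r * (y * mixedOddsDenom L y x) ^ (r - 1) * ((1 + y) * (x - y)) := by
  have hsub : mixedOddsNum L y x - y * mixedOddsDenom L y x = (1 + y) * (x - y) := by
    rw [mixedOddsNum_eq_mul_mixedOddsDenom_add, add_sub_cancel_left]
  have hpow := sq_sub_dvd_pow_sub_pow_sub r (y * mixedOddsDenom L y x) (mixedOddsNum L y x)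
  rw [hsub, mul_pow (1 + y)] at hpow
  exact dvd_of_mul_left_dvd hpow

theorem sq_sub_dvd_mixedOdds_pow_cross_sub (r : ℕ) (L y x : R) :
    (x - y) ^ 2 ∣ mixedOddsDenom L (y ^ r) (x ^ r) * mixedOddsNum L y x ^ r -
      mixedOddsNum L (y ^ r) (x ^ r) * mixedOddsDenom L y x ^ r := by
  obtain ⟨u, hnum⟩ := sq_sub_dvd_mixedOddsNum_pow_sub r L y x
  obtain ⟨v, hpow⟩ := sq_sub_dvd_pow_sub_pow_sub r y x
  obtain ⟨w, hdenom⟩ := dvd_mul_mixedOddsDenom_sub_mul_mixedOddsDenom L (sub_dvd_pow_sub_pow x y r)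
  rw [mixedOddsNum_eq_mul_mixedOddsDenom_add L (y ^ r)]
  set D := mixedOddsDenom L y x
  set E := mixedOddsDenom L (y ^ r) (x ^ r)
  have hD : (r : R) * (D ^ (r - 1) * D) = r * D ^ r := by
    obtain rfl | hr := eq_or_ne r 0
    · simp
    · rw [pow_sub_one_mul hr]
  refine ⟨E * u - (1 + y ^ r) * D ^ r * v + r * (y * D) ^ (r - 1) * w, ?_⟩
  linear_combination E * hnum - (1 + y ^ r) * D ^ r * hpow +
    r * (y * D) ^ (r - 1) * (x - y) * hdenom + (1 + y ^ r) * y ^ (r - 1) * (x - y) * hD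

/-- Taking `x` to be the variable of a polynomial ring shows that `a` is a root of multiplicity at
least two. -/
theorem stmt_9_general (r : ℕ) (a L x : R) :
    (x - a) ^ 2 ∣
      (1 + L + a ^ r + L * x ^ r) * ((1 + L) * a * x + L * a + x) ^ r -
      ((1 + L) * a ^ r * x ^ r + L * a ^ r + x ^ r) * (1 + L + a + L * x) ^ r :=
  sq_sub_dvd_mixedOdds_pow_cross_sub r L a x

end CommRing

theorem eval_eq_zero_and_deriv_eval_eq_zero_of_sq_dvd {𝕜 : Type*} [NontriviallyNormedField 𝕜]
    {p : 𝕜[X]} {a : 𝕜} (h : (X - C a) ^ 2 ∣ p) :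
    p.eval a = 0 ∧ deriv (fun x ↦ p.eval x) a = 0 := by
  obtain ⟨q, rfl⟩ := h
  constructor
  · simp
  · rw [Polynomial.deriv]
    simp [derivative_pow]

/-- The mixture polynomial
`Q(x) = (1+λ+a^r+λx^r)((1+λ)ax+λa+x)^r − ((1+λ)a^r x^r+λa^r+x^r)(1+λ+a+λx)^r`
has `x = a` as a root of multiplicity at least two: `Q(a) = 0` and `Q'(a) = 0`. -/
theorem stmt_9 (r : ℕ) (hr : 2 ≤ r) (a L : ℝ) (ha : 1 ≤ a) (hL : 0 < L)
    (Q : ℝ → ℝ)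
    (hQ : ∀ x : ℝ, Q x =
      (1 + L + a ^ r + L * x ^ r) * ((1 + L) * a * x + L * a + x) ^ r -
      ((1 + L) * a ^ r * x ^ r + L * a ^ r + x ^ r) * (1 + L + a + L * x) ^ r) :
    Q a = 0 ∧ deriv Q a = 0 := by
  have hroot := eval_eq_zero_and_deriv_eval_eq_zero_of_sq_dvd (stmt_9_general r (C a) (C L) X)
  simpa only [eval_add, eval_sub, eval_mul, eval_pow, eval_one, eval_C, eval_X, ← hQ] using hroot
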